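/- arXiv:2110.10660 — 5 statements merged into one kernel-verified Lean document; each statement's English description precedes it below -/
import Mathlib

section
/- Let y, v : [0, ∞) → ℝ be differentiable functions satisfying the closed-loop equations y′(t) = −y(t)·v(t) and v′(t) = −v(t) + y(t)² − 2v(t)² for all t ≥ 0. If v(0) = y(0)², then v(t) = y(t)² for all t ≥ 0. -/
/-!
Along solutions the defect `w = v - y²` satisfies `w' = -(1 + 2v) w`. This equation is linear and
homogeneous with a continuous coefficient, so by Grönwall's inequality `w` vanishes for all later
times once it vanishes initially.
-/

open Set

theorem eqOn_zero_of_hasDerivWithinAt_clm_apply {E : Type*} [NormedAddCommGroup E]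
    [NormedSpace ℝ E] {A : ℝ → E →L[ℝ] E} {w : ℝ → E} {a b : ℝ}
    (hA : ContinuousOn A (Icc a b))
    (hw : ∀ t ∈ Icc a b, HasDerivWithinAt w (A t (w t)) (Icc a b) t)
    (ha : w a = 0) : EqOn w 0 (Icc a b) := by
  obtain ⟨K, hK⟩ := isCompact_Icc.exists_bound_of_continuousOn hA
  have hw_right : ∀ t ∈ Ico a b, HasDerivWithinAt w (A t (w t)) (Ici t) t := fun t ht =>
    (hw t (Ico_subset_Icc_self ht)).mono_of_mem_nhdsWithin (Icc_mem_nhdsGE_of_mem ht)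
  have hw_bound : ∀ t ∈ Ico a b, ‖A t (w t)‖ ≤ K * ‖w t‖ := fun t ht =>
    (A t).le_of_opNorm_le (hK t (Ico_subset_Icc_self ht)) (w t)
  exact eq_zero_of_abs_deriv_le_mul_abs_self_of_eq_zero_right
    (HasDerivWithinAt.continuousOn hw) hw_right ha hw_bound

section

variable {𝔸 : Type*} [NormedCommRing 𝔸] [NormedAlgebra ℝ 𝔸] {y v : ℝ → 𝔸}

theorem hasDerivWithinAt_sub_sq_of_closed_loop {s : Set ℝ} {t : ℝ}
    (hy : HasDerivWithinAt y (-(y t * v t)) s t)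
    (hv : HasDerivWithinAt v (-v t + y t ^ 2 - 2 * v t ^ 2) s t) :
    HasDerivWithinAt (fun r => v r - y r ^ 2) (-(1 + 2 * v t) * (v t - y t ^ 2)) s t := by
  refine (hv.sub (hy.pow 2)).congr_deriv ?_
  push_cast
  ring

theorem center_manifold_invariant_example1_general {a b : ℝ}
    (hy : ∀ t ∈ Icc a b, HasDerivWithinAt y (-(y t * v t)) (Icc a b) t)
    (hv : ∀ t ∈ Icc a b, HasDerivWithinAt v (-v t + y t ^ 2 - 2 * v t ^ 2) (Icc a b) t)
    (ha : v a = y a ^ 2) : ∀ t ∈ Icc a b, v t = y t ^ 2 := by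
  have hv_cont : ContinuousOn v (Icc a b) := HasDerivWithinAt.continuousOn hv
  have h_coeff : ContinuousOn (fun t => ContinuousLinearMap.mul ℝ 𝔸 (-(1 + 2 * v t)))
      (Icc a b) := by fun_prop
  have h_defect : EqOn (fun t => v t - y t ^ 2) 0 (Icc a b) :=
    eqOn_zero_of_hasDerivWithinAt_clm_apply h_coeff
      (fun t ht => hasDerivWithinAt_sub_sq_of_closed_loop (hy t ht) (hv t ht))
      (sub_eq_zero.2 ha)
  exact fun t ht => sub_eq_zero.1 (h_defect ht)

end

/-- Invariance of the center manifold `v = y²` for the closed-loop system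
`ẏ = −yv`, `v̇ = −v + y² − 2v²` of Example 1: if `v(0) = y(0)²` then
`v(t) = y(t)²` for all `t ≥ 0`. -/
theorem center_manifold_invariant_example1 (y v : ℝ → ℝ)
    (hy : ∀ t : ℝ, 0 ≤ t →
      HasDerivWithinAt y (-(y t * v t)) (Set.Ici (0 : ℝ)) t)
    (hv : ∀ t : ℝ, 0 ≤ t →
      HasDerivWithinAt v (-(v t) + (y t) ^ 2 - 2 * (v t) ^ 2) (Set.Ici (0 : ℝ)) t)
    (h0 : v 0 = (y 0) ^ 2) :
    ∀ t : ℝ, 0 ≤ t → v t = (y t) ^ 2 := fun T hT =>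
  center_manifold_invariant_example1_general
    (fun t ht => (hy t ht.1).mono Icc_subset_Ici_self)
    (fun t ht => (hv t ht.1).mono Icc_subset_Ici_self) h0 T (right_mem_Icc.2 hT)
end

section
/- For all real numbers y, w, e with 0 < |y| ≤ 1/√6, 0 < |w| ≤ 1/6, and |e| ≤ (1/16)·(|w| + y⁴), the following inequality holds: (y·(−y³ − y·w))/|y| + (w·(−w − 2e − w·(w + y²)))/|w| ≤ −(1/2)·|y|³ − (1/16)·|w|. -/
/-!
The derivative of `|y|` is `-|y|³ - |y| w ≤ -|y|³ + |y| |w|`. In the derivative of `|w|` the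
triggering error enters only through its size, so that derivative is at most
`-|w| + |w|² + 2 |e|`. If `|y| ≤ r`, `|w| ≤ s` and `|e| ≤ σ (|w| + y⁴)`, the positive terms are
absorbed by `|y| |w| ≤ r |w|`, `|w|² ≤ s |w|` and `y⁴ ≤ r |y|³`, which leaves the decay rates
`1 - 2σr` in `|y|³` and `1 - r - s - 2σ` in `|w|`.
-/

section LyapunovDecrease

variable {K : Type*} [Field K] [LinearOrder K] [IsStrictOrderedRing K]

theorem mul_self_mul_div_abs {a : K} (ha : a ≠ 0) (b : K) : a * (a * b) / |a| = |a| * b := by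
  rw [div_eq_iff (abs_ne_zero.mpr ha), ← mul_assoc, ← abs_mul_abs_self a]
  ring

theorem mul_div_abs_le_abs {a : K} (ha : a ≠ 0) (b : K) : a * b / |a| ≤ |b| := by
  rw [div_le_iff₀ (abs_pos.mpr ha), mul_comm |b|, ← abs_mul]
  exact le_abs_self (a * b)

theorem pow_succ_le_mul_abs_pow {a r : K} (ha : |a| ≤ r) (n : ℕ) : a ^ (n + 1) ≤ r * |a| ^ n :=
  calc
    a ^ (n + 1) ≤ |a| ^ (n + 1) := (le_abs_self _).trans_eq (abs_pow a (n + 1))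
    _ = |a| * |a| ^ n := pow_succ' |a| n
    _ ≤ r * |a| ^ n := by gcongr

theorem lyapunov_y_term_le {y : K} (hy : y ≠ 0) (w : K) :
    y * (-y ^ 3 - y * w) / |y| ≤ -|y| ^ 3 + |y| * |w| :=
  calc
    y * (-y ^ 3 - y * w) / |y| = y * (y * (-y ^ 2 - w)) / |y| := by ring
    _ = |y| * (-|y| ^ 2 + -w) := by rw [mul_self_mul_div_abs hy, sq_abs, sub_eq_add_neg]
    _ ≤ |y| * (-|y| ^ 2 + |w|) := by gcongr; exact neg_le_abs w
    _ = -|y| ^ 3 + |y| * |w| := by ring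

theorem lyapunov_w_term_le {w : K} (hw : w ≠ 0) (y e : K) :
    w * (-w - 2 * e - w * (w + y ^ 2)) / |w| ≤ -|w| + |w| ^ 2 + 2 * |e| := by
  have error_term : w * (-(2 * e)) / |w| ≤ 2 * |e| := by
    simpa only [abs_neg, abs_mul, abs_two] using mul_div_abs_le_abs hw (-(2 * e))
  have rate_le : -1 - w - y ^ 2 ≤ -1 + |w| := by
    linarith [neg_le_abs w, sq_nonneg y]
  calc
    w * (-w - 2 * e - w * (w + y ^ 2)) / |w|
        = w * (w * (-1 - w - y ^ 2)) / |w| + w * (-(2 * e)) / |w| := by ring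
    _ = |w| * (-1 - w - y ^ 2) + w * (-(2 * e)) / |w| := by rw [mul_self_mul_div_abs hw]
    _ ≤ |w| * (-1 + |w|) + 2 * |e| := by gcongr
    _ = -|w| + |w| ^ 2 + 2 * |e| := by ring

theorem example1_lyapunov_decrease_general {y w e r s σ : K} (hy0 : y ≠ 0) (hy : |y| ≤ r)
    (hw0 : w ≠ 0) (hw : |w| ≤ s) (he : |e| ≤ σ * (|w| + y ^ 4)) :
    y * (-y ^ 3 - y * w) / |y| + w * (-w - 2 * e - w * (w + y ^ 2)) / |w| ≤
      -(1 - 2 * σ * r) * |y| ^ 3 - (1 - r - s - 2 * σ) * |w| := by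
  have hσ : 0 ≤ σ := nonneg_of_mul_nonneg_left ((abs_nonneg e).trans he) (by positivity)
  have error_le : |e| ≤ σ * (|w| + r * |y| ^ 3) :=
    he.trans (by gcongr; exact pow_succ_le_mul_abs_pow hy 3)
  calc
    y * (-y ^ 3 - y * w) / |y| + w * (-w - 2 * e - w * (w + y ^ 2)) / |w|
        ≤ (-|y| ^ 3 + |y| * |w|) + (-|w| + |w| * |w| + 2 * |e|) := by
      rw [← sq |w|]
      exact add_le_add (lyapunov_y_term_le hy0 w) (lyapunov_w_term_le hw0 y e)
    _ ≤ (-|y| ^ 3 + r * |w|) + (-|w| + s * |w| + 2 * (σ * (|w| + r * |y| ^ 3))) := by gcongr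
    _ = -(1 - 2 * σ * r) * |y| ^ 3 - (1 - r - s - 2 * σ) * |w| := by ring

end LyapunovDecrease

theorem one_div_sqrt_six_le_half : 1 / Real.sqrt 6 ≤ 1 / 2 :=
  one_div_le_one_div_of_le two_pos (Real.le_sqrt_of_sq_le (by norm_num))

/-- Lyapunov decrease estimate for Example 1: in the region `0 < |y| ≤ 1/√6`,
`0 < |w| ≤ 1/6`, with the triggering rule ensuring `|e| ≤ (1/16)(|w| + y⁴)`,
the derivative of `V = |y| + |w|` along `ẏ = −y³ − yw`, `ẇ = −w − 2e − w(w + y²)`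
satisfies `V̇ ≤ −(1/2)|y|³ − (1/16)|w|`. -/
theorem example1_lyapunov_decrease (y w e : ℝ)
    (hy0 : 0 < |y|) (hy : |y| ≤ 1 / Real.sqrt 6)
    (hw0 : 0 < |w|) (hw : |w| ≤ 1 / 6)
    (he : |e| ≤ (1 / 16) * (|w| + y ^ 4)) :
    (y * (-y ^ 3 - y * w)) / |y| + (w * (-w - 2 * e - w * (w + y ^ 2))) / |w| ≤
      -(1 / 2) * |y| ^ 3 - (1 / 16) * |w| := by
  have decrease := example1_lyapunov_decrease_general (abs_pos.mp hy0)
    (hy.trans one_div_sqrt_six_le_half) (abs_pos.mp hw0) hw he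
  linarith [pow_pos hy0 3]
end

section
/- Let a₁, a₄, σ, T > 0 and a₂ ≥ 0 with 4a₁a₄ > a₂², and set b = √(4a₁a₄ − a₂²). Let u : ℝ → ℝ be differentiable on [0, T] with u(0) = 0, u′(t) ≤ a₁ + a₂·u(t) + a₄·u(t)² for all t ∈ [0, T], and u(T) ≥ σ. Then T ≥ (2/b)·(arctan((2a₄σ + a₂)/b) − arctan(a₂/b)), and this lower bound is strictly positive. -/
/-!
Since `4a(ax² + bx + c) = (2ax + b)² - discrim a b c`, a quadratic `q` with `a > 0` and negative
discriminant is positive and `1/q` has an arctangent primitive `Φ`. If `u' ≤ q(u)`, then `Φ ∘ u`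
has derivative `u'/q(u) ≤ 1`, so it grows no faster than time; and `Φ` is increasing. Separating
variables this way bounds the time directly, without comparing `u` to a solution of the Riccati
equation, which blows up in finite time.
-/

open Set

theorem comp_sub_comp_le_sub_of_deriv_right_le {Φ f u u' : ℝ → ℝ} {s t : ℝ} (hst : s ≤ t)
    (hΦ : ∀ x, HasDerivAt Φ (f x)⁻¹ x) (hf : ∀ x, 0 < f x)
    (hu : ContinuousOn u (Icc s t))
    (hu' : ∀ r ∈ Ico s t, HasDerivWithinAt u (u' r) (Ici r) r)
    (hle : ∀ r ∈ Ico s t, u' r ≤ f (u r)) :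
    Φ (u t) - Φ (u s) ≤ t - s := by
  have hΦ_cont : Continuous Φ := continuous_iff_continuousAt.2 fun x ↦ (hΦ x).continuousAt
  have hΦu' : ∀ r ∈ Ico s t, HasDerivWithinAt (Φ ∘ u) ((f (u r))⁻¹ * u' r) (Ici r) r :=
    fun r hr ↦ (hΦ (u r)).comp_hasDerivWithinAt r (hu' r hr)
  have hslope : ∀ r ∈ Ico s t, (f (u r))⁻¹ * u' r ≤ 1 := fun r hr ↦
    inv_mul_le_one_of_le₀ (hle r hr) (hf (u r)).le
  have hline (r : ℝ) : HasDerivAt (fun r ↦ Φ (u s) + (r - s)) 1 r :=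
    ((hasDerivAt_id r).sub_const s).const_add _
  have hgrowth : Φ (u t) ≤ Φ (u s) + (t - s) :=
    image_le_of_deriv_right_le_deriv_boundary (hΦ_cont.comp_continuousOn hu) hΦu' (by simp)
      (fun r _ ↦ (hline r).continuousAt.continuousWithinAt)
      (fun r _ ↦ (hline r).hasDerivWithinAt) hslope (right_mem_Icc.2 hst)
  linarith

theorem four_mul_quadratic_eq_sq_sub_discrim {R : Type*} [CommRing R] (a b c x : R) :
    4 * a * (a * x ^ 2 + b * x + c) = (2 * a * x + b) ^ 2 - discrim a b c := by
  rw [discrim]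
  ring

theorem quadratic_pos_of_discrim_neg {R : Type*} [CommRing R] [LinearOrder R]
    [IsStrictOrderedRing R] {a b c : R} (ha : 0 < a) (hdisc : discrim a b c < 0) (x : R) :
    0 < a * x ^ 2 + b * x + c := by
  have hprod : 0 < 4 * a * (a * x ^ 2 + b * x + c) := by
    rw [four_mul_quadratic_eq_sq_sub_discrim]
    exact sub_pos.2 (hdisc.trans_le (sq_nonneg _))
  exact pos_of_mul_pos_right hprod (by positivity)

/-- A primitive of `x ↦ (a x² + b x + c)⁻¹` when `discrim a b c < 0`, so that a solution of the
Riccati equation `u' = a u² + b u + c` travels from `x` to `y` in time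
`riccatiTime a b c y - riccatiTime a b c x`. If `0 ≤ discrim a b c`, the square root vanishes and
the value is `0`. -/
noncomputable def riccatiTime (a b c x : ℝ) : ℝ :=
  2 / √(-discrim a b c) * Real.arctan ((2 * a * x + b) / √(-discrim a b c))

section riccatiTime

variable {a b c : ℝ}

theorem hasDerivAt_riccatiTime (hdisc : discrim a b c < 0) (x : ℝ) :
    HasDerivAt (riccatiTime a b c) (a * x ^ 2 + b * x + c)⁻¹ x := by
  set d := √(-discrim a b c) with hd
  have hd_pos : 0 < d := Real.sqrt_pos.2 (neg_pos.2 hdisc)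
  have hquad : 4 * a * (a * x ^ 2 + b * x + c) = d ^ 2 + (2 * a * x + b) ^ 2 := by
    rw [four_mul_quadratic_eq_sq_sub_discrim, hd, Real.sq_sqrt (neg_pos.2 hdisc).le]
    ring
  have hquad_ne : 4 * a * (a * x ^ 2 + b * x + c) ≠ 0 := by
    rw [hquad]
    positivity
  have ha : a ≠ 0 := right_ne_zero_of_mul (left_ne_zero_of_mul hquad_ne)
  have hderiv : HasDerivAt (riccatiTime a b c)
      (2 / d * (1 / (1 + ((2 * a * x + b) / d) ^ 2) * (2 * a * 1 / d))) x :=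
    (((((hasDerivAt_id x).const_mul (2 * a)).add_const b).div_const d).arctan).const_mul (2 / d)
  refine hderiv.congr_deriv ?_
  calc 2 / d * (1 / (1 + ((2 * a * x + b) / d) ^ 2) * (2 * a * 1 / d))
      = 4 * a / (d ^ 2 + (2 * a * x + b) ^ 2) := by
        field_simp
        ring
    _ = (a * x ^ 2 + b * x + c)⁻¹ := by
        rw [← hquad, div_mul_cancel_left₀ (by positivity)]

theorem riccatiTime_strictMono (ha : 0 < a) (hdisc : discrim a b c < 0) :
    StrictMono (riccatiTime a b c) :=
  strictMono_of_hasDerivAt_pos (hasDerivAt_riccatiTime hdisc) fun x ↦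
    inv_pos.2 (quadratic_pos_of_discrim_neg ha hdisc x)

theorem riccatiTime_sub_le_sub {u u' : ℝ → ℝ} {s t : ℝ} (ha : 0 < a) (hdisc : discrim a b c < 0)
    (hst : s ≤ t) (hu : ContinuousOn u (Icc s t))
    (hu' : ∀ r ∈ Ico s t, HasDerivWithinAt u (u' r) (Ici r) r)
    (hle : ∀ r ∈ Ico s t, u' r ≤ a * u r ^ 2 + b * u r + c) :
    riccatiTime a b c (u t) - riccatiTime a b c (u s) ≤ t - s :=
  comp_sub_comp_le_sub_of_deriv_right_le hst (hasDerivAt_riccatiTime hdisc)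
    (quadratic_pos_of_discrim_neg ha hdisc) hu hu' hle

end riccatiTime

theorem inter_event_time_lower_bound_general {a₁ a₂ a₄ σ T b : ℝ} (ha₄ : 0 < a₄) (hT : 0 ≤ T)
    (hdisc : a₂ ^ 2 < 4 * a₁ * a₄) (hb : b = √(4 * a₁ * a₄ - a₂ ^ 2)) {u u' : ℝ → ℝ}
    (hcont : ContinuousOn u (Icc 0 T))
    (hderiv : ∀ t ∈ Ico 0 T, HasDerivWithinAt u (u' t) (Ici t) t)
    (hbound : ∀ t ∈ Ico 0 T, u' t ≤ a₁ + a₂ * u t + a₄ * u t ^ 2)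
    (hinit : u 0 < σ) (hfin : σ ≤ u T) :
    2 / b * (Real.arctan ((2 * a₄ * σ + a₂) / b) - Real.arctan ((2 * a₄ * u 0 + a₂) / b)) ≤ T ∧
      0 < 2 / b *
        (Real.arctan ((2 * a₄ * σ + a₂) / b) - Real.arctan ((2 * a₄ * u 0 + a₂) / b)) := by
  have hdiscrim : -discrim a₄ a₂ a₁ = 4 * a₁ * a₄ - a₂ ^ 2 := by
    rw [discrim]
    ring
  have hneg : discrim a₄ a₂ a₁ < 0 := by linarith
  have hmono : StrictMono (riccatiTime a₄ a₂ a₁) := riccatiTime_strictMono ha₄ hneg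
  have htime : riccatiTime a₄ a₂ a₁ (u T) - riccatiTime a₄ a₂ a₁ (u 0) ≤ T - 0 :=
    riccatiTime_sub_le_sub ha₄ hneg hT hcont hderiv fun t ht ↦ by linarith [hbound t ht]
  have hsub (x y : ℝ) : riccatiTime a₄ a₂ a₁ y - riccatiTime a₄ a₂ a₁ x =
      2 / b * (Real.arctan ((2 * a₄ * y + a₂) / b) - Real.arctan ((2 * a₄ * x + a₂) / b)) := by
    rw [riccatiTime, riccatiTime, hdiscrim, ← hb, mul_sub]
  rw [← hsub]
  exact ⟨by linarith [hmono.monotone hfin], sub_pos.2 (hmono hinit)⟩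

/-- Comparison-lemma bound on the inter-event time: if `u(0) = 0`,
`u′ ≤ a₁ + a₂ u + a₄ u²` on `[0, T]` and `u(T) ≥ σ`, then
`T ≥ (2/b)(arctan((2a₄σ + a₂)/b) − arctan(a₂/b)) > 0`, where `b = √(4a₁a₄ − a₂²)`. -/
theorem inter_event_time_lower_bound (a₁ a₂ a₄ σ T b : ℝ)
    (ha₁ : 0 < a₁) (ha₂ : 0 ≤ a₂) (ha₄ : 0 < a₄) (hσ : 0 < σ) (hT : 0 < T)
    (hdisc : a₂ ^ 2 < 4 * a₁ * a₄)
    (hb : b = Real.sqrt (4 * a₁ * a₄ - a₂ ^ 2))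
    (u u' : ℝ → ℝ)
    (hderiv : ∀ t ∈ Set.Icc (0 : ℝ) T, HasDerivWithinAt u (u' t) (Set.Icc (0 : ℝ) T) t)
    (hbound : ∀ t ∈ Set.Icc (0 : ℝ) T, u' t ≤ a₁ + a₂ * u t + a₄ * (u t) ^ 2)
    (h0 : u 0 = 0) (hfin : σ ≤ u T) :
    (2 / b) * (Real.arctan ((2 * a₄ * σ + a₂) / b) - Real.arctan (a₂ / b)) ≤ T ∧
      0 < (2 / b) * (Real.arctan ((2 * a₄ * σ + a₂) / b) - Real.arctan (a₂ / b)) := by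
  simpa only [h0, mul_zero, zero_add] using inter_event_time_lower_bound_general ha₄ hT.le hdisc hb
    (fun t ht ↦ (hderiv t ht).continuousWithinAt)
    (fun t ht ↦ (hderiv t (Ico_subset_Icc_self ht)).mono_of_mem_nhdsWithin
      (Icc_mem_nhdsGE_of_mem ht))
    (fun t ht ↦ hbound t (Ico_subset_Icc_self ht)) (h0.trans_lt hσ) hfin
end

section
/- Let L, δ, σ, T > 0 and let e : ℝ → ℝⁿ be differentiable on [0, T] with e(0) = 0 and ‖e′(t)‖ ≤ L·‖e(t)‖ + δ for all t ∈ [0, T]. If ‖e(T)‖ ≥ σ, then T ≥ (1/L)·ln(1 + σ·L/δ). -/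
/-!
Grönwall's inequality bounds `‖e‖` by the solution `u` of `u' = L u + δ`, `u 0 = 0`. Since
`u' = δ exp (L t) > 0`, the function `u` is strictly increasing whatever the sign of `L`, and it
takes the value `σ` exactly at time `(1 / L) log (1 + σ L / δ)`; as `σ ≤ u T`, this time is at
most `T`.
-/

open Set

section ZeroInitialValue

variable {K ε r x : ℝ}

theorem one_add_gronwallBound_zero_mul_div (hε : ε ≠ 0) (K x : ℝ) :
    1 + gronwallBound 0 K ε x * K / ε = Real.exp (K * x) := by
  rcases eq_or_ne K 0 with rfl | hK
  · simp
  · rw [gronwallBound_of_K_ne_0 hK]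
    field_simp
    ring

theorem gronwallBound_zero_strictMono (hε : 0 < ε) (K : ℝ) :
    StrictMono (gronwallBound 0 K ε) := by
  refine strictMono_of_deriv_pos fun x => ?_
  calc
    0 < ε * Real.exp (K * x) := by positivity
    _ = K * gronwallBound 0 K ε x + ε := by
      rw [← one_add_gronwallBound_zero_mul_div hε.ne' K x]
      field_simp
      ring
    _ = deriv (gronwallBound 0 K ε) x := (hasDerivAt_gronwallBound 0 K ε x).deriv.symm

theorem gronwallBound_zero_one_div_mul_log (hK : K ≠ 0) (hε : ε ≠ 0) (hr : 0 < 1 + r * K / ε) :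
    gronwallBound 0 K ε (1 / K * Real.log (1 + r * K / ε)) = r := by
  rw [gronwallBound_of_K_ne_0 hK]
  have hexp : Real.exp (K * (1 / K * Real.log (1 + r * K / ε))) = 1 + r * K / ε := by
    rw [← mul_assoc, mul_one_div_cancel hK, one_mul, Real.exp_log hr]
  simp only [hexp]
  field_simp
  ring

theorem one_add_mul_div_pos_of_le_gronwallBound_zero (hε : 0 < ε) (hr : 0 ≤ r)
    (hrx : r ≤ gronwallBound 0 K ε x) : 0 < 1 + r * K / ε := by
  rcases le_total 0 K with hK | hK
  · positivity
  · calc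
      0 < Real.exp (K * x) := Real.exp_pos _
      _ = 1 + gronwallBound 0 K ε x * K / ε :=
        (one_add_gronwallBound_zero_mul_div hε.ne' K x).symm
      _ ≤ 1 + r * K / ε := by
        gcongr 1 + ?_ / ε
        exact mul_le_mul_of_nonpos_right hrx hK

theorem one_div_mul_log_le_of_le_gronwallBound_zero (hK : K ≠ 0) (hε : 0 < ε) (hr : 0 ≤ r)
    (hrx : r ≤ gronwallBound 0 K ε x) : 1 / K * Real.log (1 + r * K / ε) ≤ x := by
  have hpos := one_add_mul_div_pos_of_le_gronwallBound_zero hε hr hrx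
  rwa [← (gronwallBound_zero_strictMono hε K).le_iff_le,
    gronwallBound_zero_one_div_mul_log hK hε.ne' hpos]

end ZeroInitialValue

theorem zeno_exclusion_time_bound_general {E : Type*} [NormedAddCommGroup E] [NormedSpace ℝ E]
    {e e' : ℝ → E} {L δ σ a b : ℝ} (hL : L ≠ 0) (hδ : 0 < δ) (hσ : 0 ≤ σ) (hab : a ≤ b)
    (hcont : ContinuousOn e (Icc a b))
    (hderiv : ∀ t ∈ Ico a b, HasDerivWithinAt e (e' t) (Ici t) t)
    (hbound : ∀ t ∈ Ico a b, ‖e' t‖ ≤ L * ‖e t‖ + δ) (ha : e a = 0) (hb : σ ≤ ‖e b‖) :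
    1 / L * Real.log (1 + σ * L / δ) ≤ b - a := by
  have hgronwall : ‖e b‖ ≤ gronwallBound 0 L δ (b - a) :=
    norm_le_gronwallBound_of_norm_deriv_right_le hcont hderiv (norm_le_zero_iff.2 ha) hbound b
      (right_mem_Icc.2 hab)
  exact one_div_mul_log_le_of_le_gronwallBound_zero hL hδ hσ (hb.trans hgronwall)

/-- Grönwall-type Zeno-exclusion bound: if `e(0) = 0`, `‖e′(t)‖ ≤ L‖e(t)‖ + δ` on
`[0, T]` and `‖e(T)‖ ≥ σ`, then `T ≥ (1/L) ln(1 + σL/δ)`. -/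
theorem zeno_exclusion_time_bound (n : ℕ) (L δ σ T : ℝ)
    (hL : 0 < L) (hδ : 0 < δ) (hσ : 0 < σ) (hT : 0 < T)
    (e e' : ℝ → EuclideanSpace ℝ (Fin n))
    (hderiv : ∀ t ∈ Set.Icc (0 : ℝ) T, HasDerivWithinAt e (e' t) (Set.Icc (0 : ℝ) T) t)
    (hbound : ∀ t ∈ Set.Icc (0 : ℝ) T, ‖e' t‖ ≤ L * ‖e t‖ + δ)
    (h0 : e 0 = 0) (hfin : σ ≤ ‖e T‖) :
    (1 / L) * Real.log (1 + σ * L / δ) ≤ T := by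
  have hderiv_right : ∀ t ∈ Ico 0 T, HasDerivWithinAt e (e' t) (Ici t) t := fun t ht =>
    (hderiv t (Ico_subset_Icc_self ht)).mono_of_mem_nhdsWithin (Icc_mem_nhdsGE_of_mem ht)
  simpa only [sub_zero] using zeno_exclusion_time_bound_general hL.ne' hδ hσ.le hT.le
    (HasDerivWithinAt.continuousOn hderiv) hderiv_right
    (fun t ht => hbound t (Ico_subset_Icc_self ht)) h0 hfin
end

section
/- Let L, σ, T > 0 and let φ : ℝ → ℝ be differentiable on [0, T] with φ(0) = 0, φ(t) ≥ 0 and φ′(t) ≤ L·(1 + φ(t))² for all t ∈ [0, T]. If φ(T) ≥ σ, then T ≥ σ/(L·(1 + σ)). -/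
/-! The reciprocal linearizes a quadratic differential inequality: if `f' ≤ L f²`, then
`(1 / f)' = -f' / f² ≥ -L`, so `1 / f` decreases at rate at most `L`. For `f = 1 + φ` this says that
the drop of `1 / (1 + φ)` from `1` to at most `1 / (1 + σ)` takes time at least
`(1 - 1 / (1 + σ)) / L`. -/

open Set

section QuadraticGrowth

variable {f f' : ℝ → ℝ} {L : ℝ}

theorem monotoneOn_inv_add_mul_of_hasDerivWithinAt_le_mul_sq {D : Set ℝ} (hD : Convex ℝ D)
    (hf : ContinuousOn f D)
    (hf' : ∀ t ∈ interior D, HasDerivWithinAt f (f' t) (interior D) t)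
    (hne : ∀ t ∈ D, f t ≠ 0) (hle : ∀ t ∈ interior D, f' t ≤ L * f t ^ 2) :
    MonotoneOn (fun t ↦ (f t)⁻¹ + L * t) D := by
  refine monotoneOn_of_hasDerivWithinAt_nonneg (f' := fun t ↦ -f' t / f t ^ 2 + L * 1) hD
    ((hf.inv₀ hne).add (by fun_prop)) (fun t ht ↦ ?_) (fun t ht ↦ ?_)
  · exact ((hf' t ht).fun_inv (hne t (interior_subset ht))).add
      ((hasDerivWithinAt_id t _).const_mul L)
  · have hsq : 0 < f t ^ 2 := pow_two_pos_of_ne_zero (hne t (interior_subset ht))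
    have hratio : f' t / f t ^ 2 ≤ L := (div_le_iff₀ hsq).2 (hle t ht)
    rw [neg_div]
    linarith

theorem inv_sub_inv_le_mul_sub_of_hasDerivWithinAt_le_mul_sq {a b : ℝ} (hab : a ≤ b)
    (hf : ContinuousOn f (Icc a b))
    (hf' : ∀ t ∈ Ioo a b, HasDerivWithinAt f (f' t) (Ioo a b) t)
    (hne : ∀ t ∈ Icc a b, f t ≠ 0) (hle : ∀ t ∈ Ioo a b, f' t ≤ L * f t ^ 2) :
    (f a)⁻¹ - (f b)⁻¹ ≤ L * (b - a) := by
  rw [← interior_Icc] at hf' hle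
  have hmono : (f a)⁻¹ + L * a ≤ (f b)⁻¹ + L * b :=
    monotoneOn_inv_add_mul_of_hasDerivWithinAt_le_mul_sq (convex_Icc a b) hf hf' hne hle
      (left_mem_Icc.2 hab) (right_mem_Icc.2 hab) hab
  linarith

end QuadraticGrowth

/-- Inter-event-time bound for the relative triggering rule: if `φ(0) = 0`,
`φ ≥ 0`, `φ′ ≤ L(1 + φ)²` on `[0, T]` and `φ(T) ≥ σ`, then `T ≥ σ/(L(1 + σ))`. -/
theorem relative_threshold_inter_event_bound (L σ T : ℝ)
    (hL : 0 < L) (hσ : 0 < σ) (hT : 0 < T)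
    (φ φ' : ℝ → ℝ)
    (hderiv : ∀ t ∈ Set.Icc (0 : ℝ) T, HasDerivWithinAt φ (φ' t) (Set.Icc (0 : ℝ) T) t)
    (hnonneg : ∀ t ∈ Set.Icc (0 : ℝ) T, 0 ≤ φ t)
    (hbound : ∀ t ∈ Set.Icc (0 : ℝ) T, φ' t ≤ L * (1 + φ t) ^ 2)
    (h0 : φ 0 = 0) (hfin : σ ≤ φ T) :
    σ / (L * (1 + σ)) ≤ T := by
  have hdrop : (1 + φ 0)⁻¹ - (1 + φ T)⁻¹ ≤ L * (T - 0) :=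
    inv_sub_inv_le_mul_sub_of_hasDerivWithinAt_le_mul_sq (f := fun t ↦ 1 + φ t) hT.le
      (fun t ht ↦ ((hderiv t ht).const_add 1).continuousWithinAt)
      (fun t ht ↦ ((hderiv t (Ioo_subset_Icc_self ht)).const_add 1).mono Ioo_subset_Icc_self)
      (fun t ht ↦ (add_pos_of_pos_of_nonneg one_pos (hnonneg t ht)).ne')
      (fun t ht ↦ hbound t (Ioo_subset_Icc_self ht))
  rw [h0, add_zero, inv_one, sub_zero] at hdrop
  have hσT : σ / (1 + σ) ≤ L * T := calc
    σ / (1 + σ) = 1 - (1 + σ)⁻¹ := by field_simp; ring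
    _ ≤ 1 - (1 + φ T)⁻¹ := by gcongr
    _ ≤ L * T := hdrop
  rwa [mul_comm L, ← div_div, div_le_iff₀' hL]
end
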